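/- Assume ω > 0 and m ≥ 2, and let c'_1 = max c^{∖k}. If |γ| ≥ ω c'_1 + S(c'_1 + ε_c), then z* = (sign(γ)/ω)·(|γ| − S(c'_1 + ε_c)) is a minimizer over ℝ of the function G. -/

import Mathlib

open Finset Filter

noncomputable section

/-- The sign of a real number, with the convention `sgn 0 = 1`. -/
def sgn (t : ℝ) : ℝ := if t < 0 then -1 else 1

/-- A permutation sorting the absolute values of `β` in nonincreasing order. -/
def sortPerm {p : ℕ} (β : Fin p → ℝ) : Equiv.Perm (Fin p) :=
  (Fin.revPerm).trans (Tuple.sort fun j => |β j|)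

/-- The sorted ℓ₁ norm `J(β) = Σ_j λ_j |β|_(j)`. -/
def sortedL1 {p : ℕ} (lam β : Fin p → ℝ) : ℝ :=
  ∑ j, lam j * |β (sortPerm β j)|

/-- `β(z)`: the vector obtained from `β` by replacing entries of the cluster
`{i : |β i| = ck}` by `sign(β i) * z`. -/
def cupd {p : ℕ} (β : Fin p → ℝ) (ck z : ℝ) : Fin p → ℝ :=
  fun i => if |β i| = ck then sgn (β i) * z else β i

/-- The partial sorted ℓ₁ norm `H(z) = J(β(z))`. -/
def Hfun {p : ℕ} (lam β : Fin p → ℝ) (ck : ℝ) (z : ℝ) : ℝ :=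
  sortedL1 lam (cupd β ck z)

/-- `S(w) = Σ_{j ∈ C(w)} λ_{(j)⁻_w}`, where `C(w) = {j : |β(w)_j| = |w|}`. -/
def Sval {p : ℕ} (lam β : Fin p → ℝ) (ck : ℝ) (w : ℝ) : ℝ :=
  ∑ j, if |cupd β ck w j| = |w| then lam ((sortPerm (cupd β ck w))⁻¹ j) else 0

/-- squared Euclidean norm -/
def sqnorm {n : ℕ} (v : Fin n → ℝ) : ℝ := ∑ i, (v i) ^ 2

/-- `G(z) = (1/2)‖y − Xβ(z)‖² + H(z)`. -/
def Gfun {n p : ℕ} (lam : Fin p → ℝ) (X : Matrix (Fin n) (Fin p) ℝ) (y : Fin n → ℝ)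
    (β : Fin p → ℝ) (ck : ℝ) (z : ℝ) : ℝ :=
  (1/2) * sqnorm (fun i => y i - ∑ j, X i j * cupd β ck z j) + Hfun lam β ck z

/-- `x̃ = Σ_{j ∈ C_k} sign(β_j) X_{:j}`. -/
def xtil {n p : ℕ} (X : Matrix (Fin n) (Fin p) ℝ) (β : Fin p → ℝ) (ck : ℝ) : Fin n → ℝ :=
  fun i => ∑ j, if |β j| = ck then sgn (β j) * X i j else 0

/-- `γ = c_k ω + x̃ᵀ r` where `r = y − Xβ` and `ω = ‖x̃‖²`. -/
def gam {n p : ℕ} (X : Matrix (Fin n) (Fin p) ℝ) (y : Fin n → ℝ) (β : Fin p → ℝ) (ck : ℝ) : ℝ :=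
  ck * sqnorm (xtil X β ck) + ∑ i, xtil X β ck i * (y i - ∑ j, X i j * β j)

end

/-!
Let `σ` sort `|β(v)|` for some `v` with `|v|` above all magnitudes outside the cluster. Weighting
the entries of `|β(w)|` in the order `σ` gives the function `S(v) |w| + R` of `w`, where `R` does
not depend on `w`. By the rearrangement inequality it is a lower bound for `H(w)`, attained when
`|w|` is at least all magnitudes outside the cluster. So, up to an additive constant,
`ω w² / 2 - γ w + S(v) |w|` bounds `G` from below. Its minimizer is the soft-thresholding point
`z*`, and the hypothesis on `|γ|` says exactly that `|z*| ≥ c'₁`, where the bound is attained.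
-/

section Sgn

lemma abs_sgn (t : ℝ) : |sgn t| = 1 := by
  unfold sgn
  split_ifs <;> simp

lemma sgn_mul_abs (t : ℝ) : sgn t * |t| = t := by
  unfold sgn
  split_ifs with h
  · rw [abs_of_neg h, neg_one_mul, neg_neg]
  · rw [abs_of_nonneg (not_lt.mp h), one_mul]

lemma mul_sgn_self (t : ℝ) : t * sgn t = |t| := by
  unfold sgn
  split_ifs with h
  · rw [abs_of_neg h, mul_neg_one]
  · rw [abs_of_nonneg (not_lt.mp h), mul_one]

end Sgn

section SoftThreshold

lemma neg_sq_le_quadratic_add_mul_abs {ω g s a : ℝ} (hω : 0 ≤ ω) (ha : ω * a = |g| - s) (w : ℝ) :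
    -(ω * a ^ 2 / 2) ≤ ω * w ^ 2 / 2 - g * w + s * |w| := by
  have hgw : g * w ≤ |g| * |w| := (le_abs_self _).trans (abs_mul g w).le
  have hsquare : 0 ≤ ω * (|w| - a) ^ 2 := by positivity
  calc -(ω * a ^ 2 / 2)
      ≤ ω * (|w| - a) ^ 2 / 2 - ω * a ^ 2 / 2 := by linarith
    _ = ω * |w| ^ 2 / 2 - ω * a * |w| := by ring
    _ = ω * w ^ 2 / 2 - |g| * |w| + s * |w| := by rw [ha, sq_abs]; ring
    _ ≤ ω * w ^ 2 / 2 - g * w + s * |w| := by linarith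

lemma quadratic_add_mul_abs_sgn_mul {ω g s a : ℝ} (ha₀ : 0 ≤ a) (ha : ω * a = |g| - s) :
    ω * (sgn g * a) ^ 2 / 2 - g * (sgn g * a) + s * |sgn g * a| = -(ω * a ^ 2 / 2) := by
  have hsq : sgn g ^ 2 = 1 := by rw [← sq_abs, abs_sgn, one_pow]
  rw [mul_pow, hsq, one_mul, ← mul_assoc, mul_sgn_self, abs_mul, abs_sgn, one_mul,
    abs_of_nonneg ha₀]
  linear_combination a * ha

/-- The soft-thresholding point of the slope `g` at the level `s`, for the curvature `ω`: the
minimizer of `z ↦ ω z² / 2 - g z + s |z|` when `s ≤ |g|`. It is not clipped at `0`, so for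
`s > |g|` it is not the usual soft-thresholding operator. -/
noncomputable def softThreshold (ω g s : ℝ) : ℝ :=
  sgn g / ω * (|g| - s)

theorem softThreshold_minimizes {ω g s : ℝ} (hω : 0 < ω) (hs : s ≤ |g|) (w : ℝ) :
    ω * softThreshold ω g s ^ 2 / 2 - g * softThreshold ω g s + s * |softThreshold ω g s| ≤
      ω * w ^ 2 / 2 - g * w + s * |w| := by
  have ha : ω * ((|g| - s) / ω) = |g| - s := mul_div_cancel₀ _ hω.ne'
  have ha₀ : 0 ≤ (|g| - s) / ω := div_nonneg (sub_nonneg.mpr hs) hω.le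
  rw [softThreshold, mul_comm_div, quadratic_add_mul_abs_sgn_mul ha₀ ha]
  exact neg_sq_le_quadratic_add_mul_abs hω.le ha w

lemma abs_softThreshold {ω g s : ℝ} (hω : 0 ≤ ω) (hs : s ≤ |g|) :
    |softThreshold ω g s| = (|g| - s) / ω := by
  rw [softThreshold, abs_mul, abs_div, abs_sgn, abs_of_nonneg hω,
    abs_of_nonneg (sub_nonneg.mpr hs), one_div_mul_eq_div]

end SoftThreshold

section SortedL1

lemma sum_mul_comp_perm_le_of_antitone {ι R : Type*} [Fintype ι] [LinearOrder ι]
    [Semiring R] [LinearOrder R] [IsStrictOrderedRing R] [ExistsAddOfLE R] {lam f : ι → R}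
    (hlam : Antitone lam) {σ : Equiv.Perm ι} (hσ : Antitone (f ∘ σ)) (τ : Equiv.Perm ι) :
    ∑ j, lam j * f (τ j) ≤ ∑ j, lam j * f (σ j) := by
  simpa using (hlam.monovary hσ).sum_mul_comp_perm_le_sum_mul (σ := τ.trans σ.symm)

variable {p : ℕ} {lam : Fin p → ℝ}

lemma antitone_abs_comp_sortPerm (b : Fin p → ℝ) : Antitone fun j => |b (sortPerm b j)| :=
  fun _ _ hij => Tuple.monotone_sort (fun j => |b j|) (Fin.rev_le_rev.mpr hij)

lemma sum_mul_abs_comp_perm_le_sortedL1 (hlam : Antitone lam) (b : Fin p → ℝ)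
    (τ : Equiv.Perm (Fin p)) : ∑ j, lam j * |b (τ j)| ≤ sortedL1 lam b :=
  sum_mul_comp_perm_le_of_antitone (f := fun j => |b j|) hlam (antitone_abs_comp_sortPerm b) τ

lemma sortedL1_eq_of_antitone (hlam : Antitone lam) {b : Fin p → ℝ} {σ : Equiv.Perm (Fin p)}
    (hσ : Antitone fun j => |b (σ j)|) : sortedL1 lam b = ∑ j, lam j * |b (σ j)| :=
  le_antisymm (sum_mul_comp_perm_le_of_antitone (f := fun j => |b j|) hlam hσ (sortPerm b))
    (sum_mul_abs_comp_perm_le_sortedL1 hlam b σ)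

end SortedL1

section PartialSortedL1

variable {p : ℕ} {lam β : Fin p → ℝ} {ck c₁ v z : ℝ}

lemma abs_cupd (β : Fin p → ℝ) (ck z : ℝ) (j : Fin p) :
    |cupd β ck z j| = if |β j| = ck then |z| else |β j| := by
  unfold cupd
  split_ifs
  · rw [abs_mul, abs_sgn, one_mul]
  · rfl

lemma antitone_abs_cupd_of_top (hβ : ∀ j, |β j| ≠ ck → |β j| ≤ c₁) (hv : c₁ < |v|)
    (hz : c₁ ≤ |z|) {σ : Equiv.Perm (Fin p)} (hσ : Antitone fun j => |cupd β ck v (σ j)|) :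
    Antitone fun j => |cupd β ck z (σ j)| := by
  intro i j hij
  have h := hσ hij
  simp only [abs_cupd] at h ⊢
  split_ifs at h ⊢ with hj hi hi
  · exact le_rfl
  · exact absurd (h.trans (hβ _ hi)) hv.not_ge
  · exact (hβ _ hj).trans hz
  · exact h

/-- The contribution `R = Σ_{j ∉ C_k} λ_{(j)⁻_v} |β_j|` of the entries outside the cluster to
`J(β(v))`: the constant term of `H` on the range where `β(v)` and `β(z)` are sorted alike. -/
noncomputable def offClusterL1 (lam β : Fin p → ℝ) (ck v : ℝ) : ℝ :=
  ∑ j, if |β j| = ck then 0 else lam ((sortPerm (cupd β ck v))⁻¹ j) * |β j|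

lemma sum_mul_abs_cupd_comp_sortPerm (lam : Fin p → ℝ) (hβ : ∀ j, |β j| ≠ ck → |β j| < |v|)
    (z : ℝ) :
    ∑ j, lam j * |cupd β ck z (sortPerm (cupd β ck v) j)| =
      Sval lam β ck v * |z| + offClusterL1 lam β ck v := by
  simp only [Sval, offClusterL1, Equiv.Perm.inv_def]
  rw [← Equiv.sum_comp (sortPerm (cupd β ck v)).symm, sum_mul, ← sum_add_distrib]
  refine sum_congr rfl fun j _ => ?_
  rw [Equiv.apply_symm_apply, abs_cupd, abs_cupd]
  by_cases hj : |β j| = ck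
  · simp only [hj, if_true, add_zero]
  · simp only [hj, (hβ j hj).ne, if_false, zero_mul, zero_add]

lemma sval_mul_abs_add_offClusterL1_le_hfun (hlam : Antitone lam)
    (hβ : ∀ j, |β j| ≠ ck → |β j| < |v|) (w : ℝ) :
    Sval lam β ck v * |w| + offClusterL1 lam β ck v ≤ Hfun lam β ck w := by
  rw [← sum_mul_abs_cupd_comp_sortPerm lam hβ]
  exact sum_mul_abs_comp_perm_le_sortedL1 hlam _ _

lemma hfun_eq_of_le_abs (hlam : Antitone lam) (hβ : ∀ j, |β j| ≠ ck → |β j| ≤ c₁)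
    (hv : c₁ < |v|) (hz : c₁ ≤ |z|) :
    Hfun lam β ck z = Sval lam β ck v * |z| + offClusterL1 lam β ck v := by
  rw [← sum_mul_abs_cupd_comp_sortPerm lam fun j hj => (hβ j hj).trans_lt hv]
  exact sortedL1_eq_of_antitone hlam
    (antitone_abs_cupd_of_top hβ hv hz (antitone_abs_comp_sortPerm _))

end PartialSortedL1

section LeastSquares

variable {n p : ℕ}

lemma sqnorm_add_mul (u v : Fin n → ℝ) (t : ℝ) :
    sqnorm (fun i => u i + t * v i) = sqnorm u + 2 * t * ∑ i, v i * u i + t ^ 2 * sqnorm v := by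
  simp only [sqnorm, mul_sum, ← sum_add_distrib]
  exact sum_congr rfl fun i _ => by ring

variable (X : Matrix (Fin n) (Fin p) ℝ) (y : Fin n → ℝ) (β : Fin p → ℝ) (ck z : ℝ)

lemma cupd_add_ite (j : Fin p) :
    cupd β ck z j + (ck - z) * (if |β j| = ck then sgn (β j) else 0) = β j := by
  unfold cupd
  split_ifs with hj
  · linear_combination sgn (β j) * -hj + sgn_mul_abs (β j)
  · rw [mul_zero, add_zero]

lemma residual_cupd (i : Fin n) :
    y i - ∑ j, X i j * cupd β ck z j =
      (y i - ∑ j, X i j * β j) + (ck - z) * xtil X β ck i := by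
  have hXβ : ∑ j, X i j * β j = ∑ j, X i j * cupd β ck z j + (ck - z) * xtil X β ck i := by
    unfold xtil
    rw [mul_sum, ← sum_add_distrib]
    refine sum_congr rfl fun j _ => ?_
    conv_lhs => rw [← cupd_add_ite β ck z j]
    split_ifs <;> ring
  rw [hXβ]
  ring

lemma sqnorm_residual_cupd :
    sqnorm (fun i => y i - ∑ j, X i j * cupd β ck z j) =
      sqnorm (xtil X β ck) * z ^ 2 - 2 * gam X y β ck * z +
        sqnorm (fun i => y i - ∑ j, X i j * cupd β ck 0 j) := by
  simp only [residual_cupd X y β ck, sqnorm_add_mul, gam]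
  ring

lemma gfun_eq (lam : Fin p → ℝ) :
    Gfun lam X y β ck z =
      sqnorm (xtil X β ck) * z ^ 2 / 2 - gam X y β ck * z + Hfun lam β ck z +
        sqnorm (fun i => y i - ∑ j, X i j * cupd β ck 0 j) / 2 := by
  rw [Gfun, sqnorm_residual_cupd]
  ring

end LeastSquares

lemma forall_le_of_forall_ne_le {ι κ α : Type*} [LE α] {b : ι → α} {c : κ → α} {k : κ} {a : α}
    (hcover : ∀ j, ∃ i, b j = c i) (ha : ∀ i, i ≠ k → c i ≤ a) (j : ι) (hj : b j ≠ c k) :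
    b j ≤ a := by
  obtain ⟨i, hi⟩ := hcover j
  rw [hi] at hj ⊢
  exact ha i (ne_of_apply_ne c hj)

theorem top_case_minimizes_G_general {n p : ℕ} {lam : Fin p → ℝ} (hlam : Antitone lam)
    (X : Matrix (Fin n) (Fin p) ℝ) (y : Fin n → ℝ) {β : Fin p → ℝ} {ck c₁ v : ℝ}
    (hβ : ∀ j, |β j| ≠ ck → |β j| ≤ c₁) (hc₁ : 0 ≤ c₁) (hv : c₁ < |v|)
    (hω : 0 < sqnorm (xtil X β ck))
    (hγ : sqnorm (xtil X β ck) * c₁ + Sval lam β ck v ≤ |gam X y β ck|) (w : ℝ) :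
    Gfun lam X y β ck
        (softThreshold (sqnorm (xtil X β ck)) (gam X y β ck) (Sval lam β ck v)) ≤
      Gfun lam X y β ck w := by
  have hs : Sval lam β ck v ≤ |gam X y β ck| :=
    (le_add_of_nonneg_left (mul_nonneg hω.le hc₁)).trans hγ
  have hz : c₁ ≤ |softThreshold (sqnorm (xtil X β ck)) (gam X y β ck) (Sval lam β ck v)| := by
    rw [abs_softThreshold hω.le hs, le_div_iff₀' hω]
    exact le_sub_right_of_add_le hγ
  have hmin := softThreshold_minimizes hω hs w
  have hHw := sval_mul_abs_add_offClusterL1_le_hfun hlam (fun j hj => (hβ j hj).trans_lt hv) w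
  rw [gfun_eq, gfun_eq, hfun_eq_of_le_abs hlam hβ hv hz]
  linarith

/-- top case of the SLOPE thresholding operator. With `c'_1 = max c^{∖k}`,
if `|γ| ≥ ω c'_1 + S(c'_1 + ε)` then `z* = (sign γ / ω)(|γ| − S(c'_1 + ε))` minimizes `G`. -/
theorem top_case_minimizes_G
    {n p m : ℕ} (hn : 0 < n) (hp : 0 < p) (hm : 0 < m)
    (lam : Fin p → ℝ)
    (hlam_mono : ∀ i j : Fin p, i ≤ j → lam j ≤ lam i)
    (hlam_nonneg : ∀ j, 0 ≤ lam j)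
    (β : Fin p → ℝ) (c : Fin m → ℝ)
    (hc_anti : StrictAnti c) (hc_nonneg : ∀ i, 0 ≤ c i)
    (h_attain : ∀ i, ∃ j, |β j| = c i)
    (h_cover : ∀ j, ∃ i, |β j| = c i)
    (k : Fin m)
    (ε : ℝ) (hε_pos : 0 < ε)
    (hε_sep : ∀ i j, i ≠ j → ε < |c i - c j|)
    (hε_min : ∀ i, c i ≠ 0 → ε < c i)
    (X : Matrix (Fin n) (Fin p) ℝ) (y : Fin n → ℝ)
    (hm2 : 2 ≤ m)
    (hω : 0 < sqnorm (xtil X β (c k)))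
    (c1 : ℝ)
    (hc1_mem : ∃ i, i ≠ k ∧ c1 = c i)
    (hc1_max : ∀ i, i ≠ k → c i ≤ c1)
    (hγ : sqnorm (xtil X β (c k)) * c1 + Sval lam β (c k) (c1 + ε) ≤ |gam X y β (c k)|) :
    ∀ w : ℝ,
      Gfun lam X y β (c k)
          (sgn (gam X y β (c k)) / sqnorm (xtil X β (c k)) *
            (|gam X y β (c k)| - Sval lam β (c k) (c1 + ε)))
        ≤ Gfun lam X y β (c k) w := by
  have hc1 : 0 ≤ c1 := hc1_mem.elim fun i hi => hi.2 ▸ hc_nonneg i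
  exact top_case_minimizes_G_general hlam_mono X y (forall_le_of_forall_ne_le h_cover hc1_max) hc1
    ((lt_add_of_pos_right c1 hε_pos).trans_le (le_abs_self _)) hω hγ
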